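/- Let a be a G-stable ideal of A. Suppose that for all additive subgroups X, Y of A that are each generated by finitely many elements, XY ⊆ a implies that there exists n ≥ 1 with ⟨X^n⟩_G · ⟨Y⟩_G ⊆ a, where ⟨Z⟩_G denotes the G-stable additive subgroup of A generated by Z. If rad_G(a) is a G-prime of A, then rad(a) is a prime ideal of A. -/

import Mathlib

/-!
If `x * y ∈ rad a`, then `x ^ m * y ^ m ∈ a` for some `m`. The hypothesis applied to the cyclic
groups generated by `x ^ m` and `y ^ m` gives `n` such that the `G`-stable ideals generated by
`(x ^ m) ^ n` and `y ^ m` have product inside `a ≤ rad_G a`. By `G`-primality one of these elements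
lies in `rad_G a ≤ rad a`, so `x` or `y` lies in `rad a`.
-/

open Pointwise

/-- An ideal of `A` is `G`-stable if it is preserved by the action of every `g : G`. -/
def IsGStableIdeal (G : Type*) {A : Type*} [Group G] [CommRing A] [MulSemiringAction G A]
    (I : Ideal A) : Prop :=
  ∀ g : G, ∀ x ∈ I, g • x ∈ I

/-- A `G`-prime of `A` is a proper `G`-stable ideal `p` such that for all `G`-stable ideals
`a`, `b`, `a * b ⊆ p` implies `a ⊆ p` or `b ⊆ p`. -/
def IsGPrime (G : Type*) {A : Type*} [Group G] [CommRing A] [MulSemiringAction G A]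
    (p : Ideal A) : Prop :=
  p ≠ ⊤ ∧ IsGStableIdeal G p ∧
    ∀ a b : Ideal A, IsGStableIdeal G a → IsGStableIdeal G b → a * b ≤ p → a ≤ p ∨ b ≤ p

/-- The `G`-radical of a `G`-stable ideal `a`: the sum of all `G`-stable ideals `c`
with `c ^ n ⊆ a` for some `n ≥ 1`. -/
def gRadical (G : Type*) {A : Type*} [Group G] [CommRing A] [MulSemiringAction G A]
    (a : Ideal A) : Ideal A :=
  sSup {c : Ideal A | IsGStableIdeal G c ∧ ∃ n ≥ 1, c ^ n ≤ a}

/-- The `n`-fold product `X ^ n` of an additive subgroup of a ring, for `n ≥ 1`.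
(The value at `n = 0` is a junk value, never used below.) -/
def sgPow {A : Type*} [CommRing A] (X : AddSubgroup A) : ℕ → AddSubgroup A
  | 0 => ⊥
  | 1 => X
  | (n + 2) => sgPow X (n + 1) * X

/-- The `G`-stable additive subgroup of `A` generated by a set `s`. -/
def gOrbitClosure (G : Type*) {A : Type*} [Group G] [CommRing A] [MulSemiringAction G A]
    (s : Set A) : AddSubgroup A :=
  AddSubgroup.closure (⋃ g : G, (g • ·) '' s)

/-- The ideal generated by the `G`-orbit of an element. -/
def orbitIdeal (G : Type*) {A : Type*} [Group G] [CommRing A] [MulSemiringAction G A]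
    (x : A) : Ideal A :=
  Ideal.span (Set.range fun g : G => g • x)

lemma orbitIdeal_stable (G : Type*) {A : Type*} [Group G] [CommRing A] [MulSemiringAction G A]
    (x : A) : IsGStableIdeal G (orbitIdeal G x) := by
  intro g y hy
  have h : orbitIdeal G x ≤ (orbitIdeal G x).comap (MulSemiringAction.toRingHom G A g) := by
    refine Ideal.span_le.2 ?_
    rintro _ ⟨k, rfl⟩
    exact Ideal.subset_span ⟨g * k, mul_smul g k x⟩
  exact h hy

lemma mem_orbitIdeal_self (G : Type*) {A : Type*} [Group G] [CommRing A] [MulSemiringAction G A]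
    (x : A) : x ∈ orbitIdeal G x :=
  Ideal.subset_span ⟨1, one_smul G x⟩

lemma gRadical_le_radical (G : Type*) {A : Type*} [Group G] [CommRing A] [MulSemiringAction G A]
    (a : Ideal A) : gRadical G a ≤ a.radical := by
  refine sSup_le ?_
  rintro c ⟨-, n, -, hn⟩ x hx
  exact ⟨n, hn (Ideal.pow_mem_pow hx n)⟩

lemma le_gRadical (G : Type*) {A : Type*} [Group G] [CommRing A] [MulSemiringAction G A]
    {a : Ideal A} (ha : IsGStableIdeal G a) : a ≤ gRadical G a :=
  le_sSup ⟨ha, 1, le_rfl, (pow_one a).le⟩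

lemma addSubgroup_mul_mem_mul {A : Type*} [CommRing A] {X Y : AddSubgroup A} {x y : A}
    (hx : x ∈ X) (hy : y ∈ Y) : x * y ∈ X * Y :=
  AddSubmonoid.mul_mem_mul (M := X.toAddSubmonoid) (N := Y.toAddSubmonoid) hx hy

lemma pow_mem_sgPow {A : Type*} [CommRing A] {X : AddSubgroup A} {x : A} (hx : x ∈ X) :
    ∀ n ≥ 1, x ^ n ∈ sgPow X n
  | 0, h => by omega
  | 1, _ => by simpa [sgPow] using hx
  | n + 2, _ => by
    rw [pow_succ]
    exact addSubgroup_mul_mem_mul (pow_mem_sgPow hx (n + 1) (by omega)) hx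

lemma smul_mem_gOrbitClosure {G A : Type*} [Group G] [CommRing A] [MulSemiringAction G A]
    {s : Set A} {x : A} (hx : x ∈ s) (g : G) : g • x ∈ gOrbitClosure G s :=
  AddSubgroup.subset_closure (Set.mem_iUnion.2 ⟨g, x, hx, rfl⟩)

/-- Suppose that for all finitely generated additive subgroups `X`, `Y` of `A` with
`XY ⊆ a` there is `n ≥ 1` with `⟨Xⁿ⟩_G ⟨Y⟩_G ⊆ a`.  If `rad_G(a)` is `G`-prime, then
`rad(a)` is prime. -/
theorem radical_isPrime_of_gRadical_isGPrime
    {G A : Type*} [Group G] [CommRing A] [MulSemiringAction G A]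
    (a : Ideal A) (ha : IsGStableIdeal G a)
    (hB1 : ∀ X Y : AddSubgroup A,
      (∃ S : Finset A, X = AddSubgroup.closure (S : Set A)) →
      (∃ T : Finset A, Y = AddSubgroup.closure (T : Set A)) →
      ((X * Y : AddSubgroup A) : Set A) ⊆ (a : Set A) →
      ∃ n ≥ 1,
        ((gOrbitClosure G ((sgPow X n : AddSubgroup A) : Set A) *
            gOrbitClosure G (Y : Set A) : AddSubgroup A) : Set A) ⊆ (a : Set A))
    (hp : IsGPrime G (gRadical G a)) :
    a.radical.IsPrime := by
  refine ⟨fun h => hp.1 (top_le_iff.1 ?_), fun {x y} hxy => ?_⟩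
  · rw [← Ideal.radical_eq_top.1 h]
    exact le_gRadical G ha
  obtain ⟨m, hm⟩ := hxy
  rw [mul_pow] at hm
  obtain ⟨n, hn1, hn⟩ := hB1 (AddSubgroup.closure {x ^ m}) (AddSubgroup.closure {y ^ m})
    ⟨{x ^ m}, by simp⟩ ⟨{y ^ m}, by simp⟩ (by
      refine AddSubmonoid.mul_le (P := a.toAddSubmonoid).2 fun u hu v hv => ?_
      obtain ⟨i, rfl⟩ := AddSubgroup.mem_closure_singleton.1 hu
      obtain ⟨j, rfl⟩ := AddSubgroup.mem_closure_singleton.1 hv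
      rw [smul_mul_smul_comm]
      exact zsmul_mem hm _)
  have hprod : orbitIdeal G ((x ^ m) ^ n) * orbitIdeal G (y ^ m) ≤ a := by
    rw [orbitIdeal, orbitIdeal, Ideal.span_mul_span', Ideal.span_le]
    rintro _ ⟨_, ⟨g, rfl⟩, _, ⟨k, rfl⟩, rfl⟩
    exact hn (addSubgroup_mul_mem_mul
      (smul_mem_gOrbitClosure
        (pow_mem_sgPow (AddSubgroup.subset_closure (Set.mem_singleton _)) n hn1) g)
      (smul_mem_gOrbitClosure (AddSubgroup.subset_closure (Set.mem_singleton _)) k))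
  -- `rad a` is radical, so `z ^ k ∈ rad a` forces `z ∈ rad a` for every `k`, including `k = 0`.
  have hrad : ∀ (z : A) (k : ℕ), z ^ k ∈ a.radical → z ∈ a.radical := fun z k hz =>
    a.radical_isRadical ⟨k, hz⟩
  rcases hp.2.2 _ _ (orbitIdeal_stable G _) (orbitIdeal_stable G _)
    (hprod.trans (le_gRadical G ha)) with h | h
  · exact Or.inl (hrad x m (hrad _ n
      (gRadical_le_radical G a (h (mem_orbitIdeal_self G _)))))
  · exact Or.inr (hrad y m (gRadical_le_radical G a (h (mem_orbitIdeal_self G _))))
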